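/- If a bilateral weighted shift S with positive bounded weights is decomposable, then either S is quasi-nilpotent, or S is invertible and its spectrum is the circle {λ : |λ| = r(S)}; in particular r₁(S) = r(S). -/

import Mathlib

open Filter

section Defs

variable {X : Type*} [NormedAddCommGroup X] [NormedSpace ℂ X]

/-- `T` possesses Bishop's property (β). -/
def HasBishopBeta (T : X →L[ℂ] X) : Prop :=
  ∀ U : Set ℂ, IsOpen U →
    ∀ f : ℕ → ℂ → X, (∀ n, AnalyticOnNhd ℂ (f n) U) →
      (∀ K : Set ℂ, K ⊆ U → IsCompact K →
        TendstoUniformlyOn (fun n z => (T - z • (1 : X →L[ℂ] X)) (f n z)) 0 atTop K) →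
      ∀ K : Set ℂ, K ⊆ U → IsCompact K →
        TendstoUniformlyOn (fun n z => f n z) 0 atTop K

/-- The lower bound `m(T) = inf {‖T x‖ : ‖x‖ = 1}` of an operator `T`. -/
noncomputable def lowerBound (T : X →L[ℂ] X) : ℝ :=
  sInf ((fun x => ‖T x‖) '' Metric.sphere (0 : X) 1)

end Defs

variable {H : Type*} [NormedAddCommGroup H] [InnerProductSpace ℂ H] [CompleteSpace H]

/-!
Let `x` be the two-sided orbit of `S` obtained by rescaling the orthonormal basis. The series
`∑ k, z⁻ᵏ xₖ` is formally an eigenvector of `S` for the eigenvalue `z`. Truncated to `[a, b)` it is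
analytic in `z ≠ 0`, and `S - z` maps it to a combination of `x_a` and `x_b` only. Bishop's
property (β) on the annulus `s < |z| < t` therefore bounds `‖xᵢ‖` for `a ≤ i ≤ b` by the two
boundary terms, which says that once `‖xₙ‖` has grown faster than `tⁿ` it never again grows slower
than `sⁿ`. Property (β) for `S*` gives the same statement with time reversed. Together they exclude
that long fast stretches and long slow stretches coexist, in whichever order they occur, so that
for `s < t` either `‖Sⁿ v‖ ≥ sⁿ ‖v‖` for all large `n` and all `v`, or `‖Sⁿ‖ ≤ tⁿ` for all large
`n`. By the spectral radius formula the first alternative holds for every `s < r(S)`. Hence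
`r₁(S) = r(S)`, and if `r(S) > 0` then `S` is invertible with spectrum inside the circle of radius
`r(S)`. As `S` is unitarily equivalent to `c S` for `|c| = 1`, the spectrum is the whole circle.
-/

open scoped Topology

section Growth

/-- A function `φ : ℤ → ℝ` whose growth cannot slow down: for all slopes `p < q`, a rise of `φ`
over `[a, i]` that beats slope `q` is followed by rises over `[i, b]` of slope at least `p`, up to
an additive constant which is the same for all `a ≤ i ≤ b`. -/
def HasPersistentGrowth (φ : ℤ → ℝ) : Prop :=
  ∀ ⦃p q : ℝ⦄, p < q → ∃ C, ∀ ⦃a i b : ℤ⦄, a ≤ i → i ≤ b →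
    φ i - φ a ≤ q * (i - a) + C ∨ p * (b - i) - C ≤ φ b - φ i

variable {φ : ℤ → ℝ}

theorem HasPersistentGrowth.of_reflection (hφ : HasPersistentGrowth fun n => -φ (-n)) {p q : ℝ}
    (hpq : p < q) :
    ∃ C, ∀ ⦃a i b : ℤ⦄, a ≤ i → i ≤ b →
      φ b - φ i ≤ q * (b - i) + C ∨ p * (i - a) - C ≤ φ i - φ a := by
  obtain ⟨C, hC⟩ := hφ hpq
  refine ⟨C, fun a i b hai hib => ?_⟩
  have := hC (neg_le_neg hib) (neg_le_neg hai)
  simp only [neg_neg, Int.cast_neg] at this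
  exact this.imp (fun h => by linarith) fun h => by linarith

theorem HasPersistentGrowth.exists_rise_ge_of_fast (hφ : HasPersistentGrowth φ)
    (hφ' : HasPersistentGrowth fun n => -φ (-n)) {p q : ℝ} (hpq : p < q) :
    ∃ C, ∀ ⦃a x y b : ℤ⦄, a ≤ x → x ≤ y → y ≤ b → q * (y - x) + C < φ y - φ x →
      φ y - φ x + p * ((b - a) - (y - x)) - C ≤ φ b - φ a := by
  obtain ⟨C₁, h₁⟩ := hφ hpq
  obtain ⟨C₂, h₂⟩ := hφ'.of_reflection hpq
  refine ⟨|C₁| + |C₂|, fun a x y b hax hxy hyb hfast => ?_⟩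
  have hC₁ := le_abs_self C₁
  have hC₂ := le_abs_self C₂
  have right := (h₁ hxy hyb).resolve_left (by linarith [abs_nonneg C₂])
  have left := (h₂ hax hxy).resolve_left (by linarith [abs_nonneg C₁])
  linarith

theorem HasPersistentGrowth.exists_rise_le_of_slow (hφ : HasPersistentGrowth φ)
    (hφ' : HasPersistentGrowth fun n => -φ (-n)) {p q : ℝ} (hpq : p < q) :
    ∃ C, ∀ ⦃a x y b : ℤ⦄, a ≤ x → x ≤ y → y ≤ b → φ y - φ x < p * (y - x) - C →
      φ b - φ a ≤ φ y - φ x + q * ((b - a) - (y - x)) + C := by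
  obtain ⟨C₁, h₁⟩ := hφ hpq
  obtain ⟨C₂, h₂⟩ := hφ'.of_reflection hpq
  refine ⟨|C₁| + |C₂|, fun a x y b hax hxy hyb hslow => ?_⟩
  have hC₁ := le_abs_self C₁
  have hC₂ := le_abs_self C₂
  have left := (h₁ hax hxy).resolve_right (by linarith [abs_nonneg C₂])
  have right := (h₂ hxy hyb).resolve_right (by linarith [abs_nonneg C₁])
  linarith

/-- An interval on which `φ` is fast and one on which it is slow cannot both be long: on the
smallest interval containing both, the first forces a large rise and the second a small one. -/
theorem HasPersistentGrowth.eventually_ge_or_eventually_le (hφ : HasPersistentGrowth φ)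
    (hφ' : HasPersistentGrowth fun n => -φ (-n)) {σ τ : ℝ} (hστ : σ < τ) :
    (∀ᶠ n : ℕ in atTop, ∀ k : ℤ, σ * n ≤ φ (k + n) - φ k) ∨
      ∀ᶠ n : ℕ in atTop, ∀ k : ℤ, φ (k + n) - φ k ≤ τ * n := by
  by_contra! ⟨hslow, hfast⟩
  obtain ⟨μ, hσμ, hμτ⟩ := exists_between hστ
  obtain ⟨p, hσp, hpμ⟩ := exists_between hσμ
  obtain ⟨q, hμq, hqτ⟩ := exists_between hμτ
  obtain ⟨C, hC⟩ := hφ.exists_rise_ge_of_fast hφ' hμq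
  obtain ⟨D, hD⟩ := hφ.exists_rise_le_of_slow hφ' hpμ
  have large (B : ℝ) {δ : ℝ} (hδ : 0 < δ) : ∀ᶠ n : ℕ in atTop, B ≤ δ * n :=
    (tendsto_natCast_atTop_atTop.const_mul_atTop hδ).eventually_ge_atTop B
  obtain ⟨n, ⟨x, hx⟩, hn⟩ := (hfast.and_eventually (large C (sub_pos.2 hqτ))).exists
  obtain ⟨l, ⟨c, hc⟩, hl⟩ := (hslow.and_eventually (large D (sub_pos.2 hσp))).exists
  have rise_ge := hC (min_le_left x c) (by lia) (le_max_left (x + n) (c + l))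
    (by push_cast; linarith)
  have rise_le := hD (min_le_right x c) (by lia) (le_max_right (x + n) (c + l))
    (by push_cast; linarith)
  have hμn : (q - μ) * n ≥ 0 := by have := sub_pos.2 hμq; positivity
  have hμl : (μ - p) * l ≥ 0 := by have := sub_pos.2 hpμ; positivity
  push_cast at rise_ge rise_le
  linarith

end Growth

section Orthogonal

variable {𝕜 ι E F G : Type*} [RCLike 𝕜] [NormedAddCommGroup E] [NormedSpace 𝕜 E]
  [NormedAddCommGroup F] [InnerProductSpace 𝕜 F] [NormedAddCommGroup G] [InnerProductSpace 𝕜 G]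

theorem pairwise_inner_smul_eq_zero {v : ι → F}
    (hv : Pairwise fun i j => inner 𝕜 (v i) (v j) = 0) (c : ι → 𝕜) :
    Pairwise fun i j => inner 𝕜 (c i • v i) (c j • v j) = 0 := fun i j hij => by
  simp only [inner_smul_left, inner_smul_right, hv hij, mul_zero]

theorem norm_sum_sq_of_pairwise_inner_eq_zero {v : ι → F}
    (hv : Pairwise fun i j => inner 𝕜 (v i) (v j) = 0) (s : Finset ι) :
    ‖∑ i ∈ s, v i‖ ^ 2 = ∑ i ∈ s, ‖v i‖ ^ 2 := by
  have : ((‖∑ i ∈ s, v i‖ : 𝕜)) ^ 2 = ∑ i ∈ s, (‖v i‖ : 𝕜) ^ 2 := by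
    simp only [← inner_self_eq_norm_sq_to_K, sum_inner, inner_sum]
    exact Finset.sum_congr rfl fun i hi =>
      Finset.sum_eq_single_of_mem i hi fun j _ hji => hv hji
  exact_mod_cast this

theorem norm_le_norm_sum_of_pairwise_inner_eq_zero {v : ι → F}
    (hv : Pairwise fun i j => inner 𝕜 (v i) (v j) = 0) {s : Finset ι} {i : ι} (hi : i ∈ s) :
    ‖v i‖ ≤ ‖∑ j ∈ s, v j‖ := by
  rw [← sq_le_sq₀ (norm_nonneg _) (norm_nonneg _), norm_sum_sq_of_pairwise_inner_eq_zero hv]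
  exact Finset.single_le_sum (f := fun j => ‖v j‖ ^ 2) (fun j _ => sq_nonneg _) hi

theorem norm_apply_le_norm_apply_of_pairwise_inner_eq_zero {x : ι → E}
    (hx : Dense (Submodule.span 𝕜 (Set.range x) : Set E)) {A : E →L[𝕜] F} {B : E →L[𝕜] G}
    (hA : Pairwise fun i j => inner 𝕜 (A (x i)) (A (x j)) = 0)
    (hB : Pairwise fun i j => inner 𝕜 (B (x i)) (B (x j)) = 0)
    (hAB : ∀ i, ‖A (x i)‖ ≤ ‖B (x i)‖) (v : E) : ‖A v‖ ≤ ‖B v‖ := by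
  refine hx.induction (P := fun v => ‖A v‖ ≤ ‖B v‖) (fun v hv => ?_)
    (isClosed_le A.continuous.norm B.continuous.norm) v
  obtain ⟨c, rfl⟩ := Finsupp.mem_span_range_iff_exists_finsupp.1 hv
  simp only [Finsupp.sum, map_sum, map_smul]
  rw [← sq_le_sq₀ (norm_nonneg _) (norm_nonneg _),
    norm_sum_sq_of_pairwise_inner_eq_zero (pairwise_inner_smul_eq_zero hA c),
    norm_sum_sq_of_pairwise_inner_eq_zero (pairwise_inner_smul_eq_zero hB c)]
  gcongr with i
  simpa only [norm_smul] using mul_le_mul_of_nonneg_left (hAB i) (norm_nonneg _)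

end Orthogonal

section Bishop

variable {X : Type*} [NormedAddCommGroup X] [NormedSpace ℂ X] {T : X →L[ℂ] X}

theorem HasBishopBeta.exists_norm_le (hT : HasBishopBeta T) {U : Set ℂ} (hU : IsOpen U) {z : ℂ}
    (hz : z ∈ U) :
    ∃ C : ℝ, ∀ f : ℂ → X, AnalyticOnNhd ℂ f U → ∀ M : ℝ,
      (∀ w ∈ U, ‖(T - w • (1 : X →L[ℂ] X)) (f w)‖ ≤ M) → ‖f z‖ ≤ C * M := by
  by_contra! hcon
  choose f hf M hM hlt using fun j : ℕ => hcon (j + 1)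
  have hM0 (j : ℕ) : 0 ≤ M j := (norm_nonneg _).trans (hM j z hz)
  have hfz (j : ℕ) : 0 < ‖f j z‖ := (mul_nonneg (by positivity) (hM0 j)).trans_lt (hlt j)
  let g (j : ℕ) (w : ℂ) : X := (‖f j z‖ : ℂ)⁻¹ • f j w
  have norm_g (j : ℕ) : ‖g j z‖ = 1 := by
    simp [g, norm_smul, (hfz j).ne']
  have norm_apply_g (j : ℕ) (w : ℂ) (hw : w ∈ U) :
      ‖(T - w • (1 : X →L[ℂ] X)) (g j w)‖ ≤ 1 / ((j : ℝ) + 1) := by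
    rw [map_smul, norm_smul, norm_inv, Complex.norm_real, norm_norm, inv_mul_le_iff₀ (hfz j),
      mul_one_div, le_div_iff₀ (by positivity), mul_comm]
    exact (mul_le_mul_of_nonneg_left (hM j w hw) (by positivity)).trans (hlt j).le
  have hconv := hT U hU g (fun j => analyticOnNhd_const.smul (hf j)) (fun K hKU _ => ?_) {z}
    (Set.singleton_subset_iff.2 hz) isCompact_singleton
  · obtain ⟨j, hj⟩ := (Metric.tendstoUniformlyOn_iff.1 hconv 1 one_pos).exists
    simpa [norm_g] using hj z rfl
  · refine Metric.tendstoUniformlyOn_iff.2 fun ε hε => ?_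
    filter_upwards [tendsto_one_div_add_atTop_nhds_zero_nat.eventually_lt_const hε] with j hj w hw
    rw [Pi.zero_apply, dist_zero_left]
    exact (norm_apply_g j w (hKU hw)).trans_lt hj

end Bishop

section Orbit

variable {E : Type*} [NormedAddCommGroup E] [InnerProductSpace ℂ E] {T : E →L[ℂ] E} {x : ℤ → E}

/-- `x` is a two-sided orbit of `T` consisting of nonzero, pairwise orthogonal vectors. An operator
having such an orbit with dense span is a bilateral weighted shift with nonzero weights; the orbit
replaces the weights, whose moduli are the ratios `‖x (n + 1)‖ / ‖x n‖`. -/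
structure IsOrthogonalOrbit (T : E →L[ℂ] E) (x : ℤ → E) : Prop where
  map_apply (n : ℤ) : T (x n) = x (n + 1)
  ne_zero (n : ℤ) : x n ≠ 0
  inner_eq_zero : Pairwise fun m n => inner ℂ (x m) (x n) = 0

/-- The part over `[a, b)` of the formal eigenvector `∑ k, z ^ (-k) • x k` of a shift
`x k ↦ x (k + 1)` with eigenvalue `z`, scaled so that the coefficient of `x i` is `1`. -/
noncomputable def truncatedEigenvector (x : ℤ → E) (a i b : ℤ) (z : ℂ) : E :=
  ∑ k ∈ Finset.Ico a b, z ^ (i - k) • x k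

theorem analyticOnNhd_truncatedEigenvector (x : ℤ → E) (a i b : ℤ) :
    AnalyticOnNhd ℂ (truncatedEigenvector x a i b) {0}ᶜ := fun _ hz =>
  Finset.analyticAt_fun_sum _ fun _ _ => (analyticAt_id.zpow hz).smul analyticAt_const

namespace IsOrthogonalOrbit

theorem pow_apply (h : IsOrthogonalOrbit T x) (n : ℕ) (k : ℤ) : (T ^ n) (x k) = x (k + n) := by
  induction n with
  | zero => simp
  | succ n ih =>
    rw [pow_succ', mul_apply_eq_comp, ih, h.map_apply, Nat.cast_succ, add_assoc]

theorem denseRange (h : IsOrthogonalOrbit T x)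
    (hx : Dense (Submodule.span ℂ (Set.range x) : Set E)) : DenseRange T := by
  refine hx.mono (show Submodule.span ℂ (Set.range x) ≤ T.range from Submodule.span_le.2 ?_)
  rintro _ ⟨n, rfl⟩
  exact ⟨x (n - 1), by simp [h.map_apply]⟩

theorem sub_smul_truncatedEigenvector (h : IsOrthogonalOrbit T x) {a b : ℤ} (hab : a ≤ b) (i : ℤ)
    {z : ℂ} (hz : z ≠ 0) :
    (T - z • (1 : E →L[ℂ] E)) (truncatedEigenvector x a i b z) =
      z ^ (i - b + 1) • x b - z ^ (i - a + 1) • x a := by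
  induction b, hab using Int.leInduction with
  | base => simp [truncatedEigenvector]
  | succ b hab ih =>
    have split : truncatedEigenvector x a i (b + 1) z =
        truncatedEigenvector x a i b z + z ^ (i - b) • x b :=
      (Finset.sum_Ico_add_eq_sum_Ico_add_one hab fun k => z ^ (i - k) • x k).symm
    rw [split, map_add, ih, sub_apply, map_smul, h.map_apply, smul_apply, one_apply_eq_self,
      smul_smul, ← zpow_one_add₀ hz, show i - (b + 1) + 1 = i - b by ring, add_comm 1]
    abel

theorem norm_le_norm_truncatedEigenvector (h : IsOrthogonalOrbit T x) {a i b : ℤ} (hai : a ≤ i)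
    (hib : i < b) (z : ℂ) : ‖x i‖ ≤ ‖truncatedEigenvector x a i b z‖ := by
  simpa [truncatedEigenvector] using norm_le_norm_sum_of_pairwise_inner_eq_zero
    (pairwise_inner_smul_eq_zero h.inner_eq_zero fun k => z ^ (i - k))
    (Finset.mem_Ico.2 ⟨hai, hib⟩)

theorem norm_sub_smul_truncatedEigenvector_le (h : IsOrthogonalOrbit T x) {a i b : ℤ}
    (hai : a ≤ i) (hib : i ≤ b) {s t : ℝ} (hs : 0 < s) {z : ℂ} (hsz : s ≤ ‖z‖) (hzt : ‖z‖ ≤ t) :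
    ‖(T - z • (1 : E →L[ℂ] E)) (truncatedEigenvector x a i b z)‖ ≤
      t * (t ^ (i - a) * ‖x a‖ + s ^ (i - b) * ‖x b‖) := by
  have hz : 0 < ‖z‖ := hs.trans_le hsz
  have ht : 0 < t := hz.trans_le hzt
  have hza : ‖z‖ ^ (i - a) ≤ t ^ (i - a) := zpow_le_zpow_left₀ (by lia) hz.le hzt
  have hzb : ‖z‖ ^ (i - b) ≤ s ^ (i - b) := by
    rw [← neg_sub b i, zpow_neg, zpow_neg]
    exact inv_anti₀ (by positivity) (zpow_le_zpow_left₀ (by lia) hs.le hsz)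
  rw [h.sub_smul_truncatedEigenvector (hai.trans hib) i (norm_pos_iff.1 hz)]
  calc ‖z ^ (i - b + 1) • x b - z ^ (i - a + 1) • x a‖
      ≤ ‖z‖ ^ (i - b) * ‖z‖ * ‖x b‖ + ‖z‖ ^ (i - a) * ‖z‖ * ‖x a‖ := by
        refine (norm_sub_le _ _).trans_eq ?_
        simp only [norm_smul, norm_zpow, zpow_add_one₀ hz.ne']
    _ ≤ s ^ (i - b) * t * ‖x b‖ + t ^ (i - a) * t * ‖x a‖ := by gcongr
    _ = t * (t ^ (i - a) * ‖x a‖ + s ^ (i - b) * ‖x b‖) := by ring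

theorem exists_norm_le_of_hasBishopBeta (h : IsOrthogonalOrbit T x) (hT : HasBishopBeta T)
    {s t : ℝ} (hs : 0 < s) (hst : s < t) :
    ∃ C : ℝ, 1 ≤ C ∧ ∀ ⦃a i b : ℤ⦄, a ≤ i → i ≤ b →
      ‖x i‖ ≤ C * (t ^ (i - a) * ‖x a‖ + s ^ (i - b) * ‖x b‖) := by
  obtain ⟨ρ, hsρ, hρt⟩ := exists_between hst
  have ht : 0 < t := hs.trans hst
  have hU : IsOpen {z : ℂ | s < ‖z‖ ∧ ‖z‖ < t} :=
    (isOpen_lt continuous_const continuous_norm).inter (isOpen_lt continuous_norm continuous_const)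
  have hρU : (ρ : ℂ) ∈ {z : ℂ | s < ‖z‖ ∧ ‖z‖ < t} := by
    simpa [abs_of_pos (hs.trans hsρ)] using ⟨hsρ, hρt⟩
  obtain ⟨C, hC⟩ := hT.exists_norm_le hU hρU
  refine ⟨max 1 (C * t), le_max_left _ _, fun a i b hai hib => ?_⟩
  have bound_nonneg : 0 ≤ t ^ (i - a) * ‖x a‖ + s ^ (i - b) * ‖x b‖ := by positivity
  rcases hib.eq_or_lt with rfl | hib'
  · calc ‖x i‖ ≤ t ^ (i - a) * ‖x a‖ + s ^ (i - i) * ‖x i‖ := by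
          rw [sub_self, zpow_zero, one_mul]
          exact le_add_of_nonneg_left (by positivity)
      _ ≤ _ := le_mul_of_one_le_left bound_nonneg (le_max_left _ _)
  · calc ‖x i‖ ≤ ‖truncatedEigenvector x a i b ρ‖ := h.norm_le_norm_truncatedEigenvector hai hib' _
      _ ≤ C * (t * (t ^ (i - a) * ‖x a‖ + s ^ (i - b) * ‖x b‖)) :=
        hC _ ((analyticOnNhd_truncatedEigenvector x a i b).mono fun z hz =>
            norm_pos_iff.1 (hs.trans hz.1)) _
          fun z hz => h.norm_sub_smul_truncatedEigenvector_le hai hib hs hz.1.le hz.2.le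
      _ ≤ _ := by
        rw [← mul_assoc]
        exact mul_le_mul_of_nonneg_right (le_max_right _ _) bound_nonneg

theorem hasPersistentGrowth_log_norm (h : IsOrthogonalOrbit T x) (hT : HasBishopBeta T) :
    HasPersistentGrowth fun n => Real.log ‖x n‖ := by
  intro p q hpq
  obtain ⟨C, hC₁, hC⟩ :=
    h.exists_norm_le_of_hasBishopBeta hT (Real.exp_pos p) (Real.exp_lt_exp.2 hpq)
  refine ⟨Real.log (2 * C), fun a i b hai hib => ?_⟩
  have hpos (n : ℤ) : 0 < ‖x n‖ := norm_pos_iff.2 (h.ne_zero n)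
  have log_le {u : ℝ} {n m : ℤ} (hle : ‖x i‖ ≤ 2 * C * (Real.exp u ^ m * ‖x n‖)) :
      Real.log ‖x i‖ ≤ Real.log (2 * C) + (m * u + Real.log ‖x n‖) := by
    have := Real.log_le_log (hpos i) hle
    rwa [Real.log_mul (by positivity) (by have := hpos n; positivity),
      Real.log_mul (by positivity) (hpos n).ne', Real.log_zpow, Real.log_exp] at this
  have hi := hC hai hib
  rcases le_total (Real.exp q ^ (i - a) * ‖x a‖) (Real.exp p ^ (i - b) * ‖x b‖) with hab | hba
  · right
    have := log_le (u := p) (n := b) (m := i - b) (by nlinarith)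
    push_cast at this
    linarith
  · left
    have := log_le (u := q) (n := a) (m := i - a) (by nlinarith)
    push_cast at this
    linarith

theorem adjoint [CompleteSpace E] (h : IsOrthogonalOrbit T x)
    (hx : Dense (Submodule.span ℂ (Set.range x) : Set E)) :
    IsOrthogonalOrbit (ContinuousLinearMap.adjoint T)
      fun n => ((‖x (-n)‖ : ℂ) ^ 2)⁻¹ • x (-n) where
  ne_zero n := by simp [h.ne_zero]
  inner_eq_zero m n hmn := by
    simp only [inner_smul_left, inner_smul_right, h.inner_eq_zero (neg_injective.ne hmn), mul_zero]
  map_apply n := by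
    have inner_dual (m k : ℤ) : inner ℂ (((‖x (-m)‖ : ℂ) ^ 2)⁻¹ • x (-m)) (x k) =
        if k = -m then 1 else 0 := by
      split_ifs with hk
      · have : (‖x (-m)‖ : ℂ) ≠ 0 := by simp [h.ne_zero]
        rw [hk, inner_smul_left, inner_self_eq_norm_sq_to_K]
        simp [this]
      · rw [inner_smul_left, h.inner_eq_zero (Ne.symm hk), mul_zero]
    refine ext_inner_right ℂ (DFunLike.congr_fun (f := innerSL ℂ _) (g := innerSL ℂ _)
      (ContinuousLinearMap.ext_on hx ?_))
    rintro _ ⟨k, rfl⟩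
    rw [innerSL_apply_apply, innerSL_apply_apply, ContinuousLinearMap.adjoint_inner_left,
      h.map_apply, inner_dual, inner_dual]
    exact if_congr (by lia) rfl rfl

theorem hasPersistentGrowth_log_norm_reflection [CompleteSpace E] (h : IsOrthogonalOrbit T x)
    (hx : Dense (Submodule.span ℂ (Set.range x) : Set E))
    (hT : HasBishopBeta (ContinuousLinearMap.adjoint T)) :
    HasPersistentGrowth fun n => -Real.log ‖x (-n)‖ := by
  convert (h.adjoint hx).hasPersistentGrowth_log_norm hT using 2 with n
  have : ‖x (-n)‖ ≠ 0 := norm_ne_zero_iff.2 (h.ne_zero _)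
  rw [← Real.log_inv]
  congr 1
  simp only [norm_smul, norm_inv, norm_pow, Complex.norm_real, norm_norm]
  field_simp

theorem pairwise_inner_pow_apply_eq_zero (h : IsOrthogonalOrbit T x) (n : ℕ) :
    Pairwise fun i j => inner ℂ ((T ^ n) (x i)) ((T ^ n) (x j)) = 0 := fun i j hij => by
  simpa only [h.pow_apply] using h.inner_eq_zero ((add_left_injective (n : ℤ)).ne hij)

theorem norm_pow_apply_le (h : IsOrthogonalOrbit T x)
    (hx : Dense (Submodule.span ℂ (Set.range x) : Set E)) {c : ℝ} {n : ℕ}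
    (hc : ∀ k, ‖x (k + n)‖ ≤ c * ‖x k‖) (v : E) : ‖(T ^ n) v‖ ≤ c * ‖v‖ := by
  have hc₀ : 0 ≤ c := nonneg_of_mul_nonneg_left ((norm_nonneg _).trans (hc 0))
    (norm_pos_iff.2 (h.ne_zero 0))
  simpa [norm_smul, abs_of_nonneg hc₀] using
    norm_apply_le_norm_apply_of_pairwise_inner_eq_zero hx (B := (c : ℂ) • (1 : E →L[ℂ] E))
      (h.pairwise_inner_pow_apply_eq_zero n)
      (pairwise_inner_smul_eq_zero h.inner_eq_zero fun _ => (c : ℂ))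
      (fun k => by simpa [h.pow_apply, norm_smul, abs_of_nonneg hc₀] using hc k) v

theorem le_norm_pow_apply (h : IsOrthogonalOrbit T x)
    (hx : Dense (Submodule.span ℂ (Set.range x) : Set E)) {c : ℝ} (hc₀ : 0 ≤ c) {n : ℕ}
    (hc : ∀ k, c * ‖x k‖ ≤ ‖x (k + n)‖) (v : E) : c * ‖v‖ ≤ ‖(T ^ n) v‖ := by
  simpa [norm_smul, abs_of_nonneg hc₀] using
    norm_apply_le_norm_apply_of_pairwise_inner_eq_zero hx (A := (c : ℂ) • (1 : E →L[ℂ] E))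
      (pairwise_inner_smul_eq_zero h.inner_eq_zero fun _ => (c : ℂ))
      (h.pairwise_inner_pow_apply_eq_zero n)
      (fun k => by simpa [h.pow_apply, norm_smul, abs_of_nonneg hc₀] using hc k) v

theorem eventually_le_norm_pow_apply_or_eventually_norm_pow_le [CompleteSpace E]
    (h : IsOrthogonalOrbit T x) (hx : Dense (Submodule.span ℂ (Set.range x) : Set E))
    (hT : HasBishopBeta T) (hTadj : HasBishopBeta (ContinuousLinearMap.adjoint T))
    {s t : ℝ} (hs : 0 < s) (hst : s < t) :
    (∀ᶠ n : ℕ in atTop, ∀ v, s ^ n * ‖v‖ ≤ ‖(T ^ n) v‖) ∨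
      ∀ᶠ n : ℕ in atTop, ‖T ^ n‖ ≤ t ^ n := by
  have ht : 0 < t := hs.trans hst
  have hpos (n : ℤ) : 0 < ‖x n‖ := norm_pos_iff.2 (h.ne_zero n)
  refine ((h.hasPersistentGrowth_log_norm hT).eventually_ge_or_eventually_le
    (h.hasPersistentGrowth_log_norm_reflection hx hTadj) (Real.log_lt_log hs hst)).imp
    (fun hn => hn.mono fun n hn => h.le_norm_pow_apply hx (by positivity) fun k => ?_)
    (fun hn => hn.mono fun n hn => (T ^ n).opNorm_le_bound (by positivity) <|
      h.norm_pow_apply_le hx fun k => ?_)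
  · rw [← Real.log_le_log_iff (by have := hpos k; positivity) (hpos _),
      Real.log_mul (by positivity) (hpos k).ne', Real.log_pow]
    linarith [hn k]
  · rw [← Real.log_le_log_iff (hpos _) (by have := hpos k; positivity),
      Real.log_mul (by positivity) (hpos k).ne', Real.log_pow]
    linarith [hn k]

end IsOrthogonalOrbit

end Orbit

section Spectrum

variable {A : Type*} [NormedRing A] [NormedAlgebra ℂ A] [CompleteSpace A]

theorem spectralRadius_ne_top (a : A) : spectralRadius ℂ a ≠ ⊤ := by
  obtain h | h := subsingleton_or_nontrivial A
  · simp [spectralRadius]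
  · obtain ⟨z, -, hz⟩ := spectrum.exists_nnnorm_eq_spectralRadius a
    exact hz ▸ ENNReal.coe_ne_top

theorem norm_le_toReal_spectralRadius {a : A} {z : ℂ} (hz : z ∈ spectrum ℂ a) :
    ‖z‖ ≤ (spectralRadius ℂ a).toReal :=
  ENNReal.toReal_mono (spectralRadius_ne_top a) (le_iSup₂ (α := ENNReal) z hz)

theorem spectrum_eq_singleton_zero_of_spectralRadius_eq_zero [Nontrivial A] {a : A}
    (ha : (spectralRadius ℂ a).toReal = 0) : spectrum ℂ a = {0} :=
  (spectrum.nonempty a).subset_singleton_iff.1 fun _ hz =>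
    norm_le_zero_iff.1 ((norm_le_toReal_spectralRadius hz).trans_eq ha)

theorem tendsto_norm_pow_rpow_inv_spectralRadius (a : A) :
    Tendsto (fun n : ℕ => ‖a ^ n‖ ^ (n : ℝ)⁻¹) atTop (𝓝 (spectralRadius ℂ a).toReal) := by
  refine ((ENNReal.tendsto_toReal (spectralRadius_ne_top a)).comp
    (spectrum.pow_norm_pow_one_div_tendsto_nhds_spectralRadius a)).congr fun n => ?_
  rw [Function.comp_apply, one_div, ENNReal.toReal_ofReal (by positivity)]

theorem toReal_spectralRadius_le_of_eventually_norm_pow_le {a : A} {t : ℝ} (ht : 0 ≤ t)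
    (h : ∀ᶠ n : ℕ in atTop, ‖a ^ n‖ ≤ t ^ n) : (spectralRadius ℂ a).toReal ≤ t := by
  refine le_of_tendsto (tendsto_norm_pow_rpow_inv_spectralRadius a) ?_
  filter_upwards [h, eventually_ne_atTop 0] with n hn hn₀
  calc ‖a ^ n‖ ^ (n : ℝ)⁻¹ ≤ (t ^ n) ^ (n : ℝ)⁻¹ := by gcongr
    _ = t := Real.pow_rpow_inv_natCast ht hn₀

theorem eq_sphere_of_forall_mul_mem {𝕜 : Type*} [NormedField 𝕜] {K : Set 𝕜} (hK : K.Nonempty)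
    {r : ℝ} (hr : ∀ z ∈ K, ‖z‖ = r) (hrot : ∀ c : 𝕜, ‖c‖ = 1 → ∀ z ∈ K, c * z ∈ K) :
    K = Metric.sphere (0 : 𝕜) r := by
  refine Set.Subset.antisymm (fun z hz => by simp [hr z hz]) fun z hz => ?_
  obtain ⟨a, ha⟩ := hK
  have norm_eq : ‖z‖ = ‖a‖ := by rw [hr a ha, mem_sphere_zero_iff_norm.1 hz]
  rcases eq_or_ne a 0 with rfl | ha₀
  · rwa [norm_eq_zero.1 (norm_eq.trans norm_zero)]
  · rw [← div_mul_cancel₀ z ha₀]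
    exact hrot _ (by rw [norm_div, norm_eq, div_self (norm_ne_zero_iff.2 ha₀)]) a ha

end Spectrum

section BoundedBelow

variable {𝕜 X : Type*} [NontriviallyNormedField 𝕜] [NormedAddCommGroup X] [NormedSpace 𝕜 X]
  [CompleteSpace X] {T : X →L[𝕜] X}

theorem isUnit_of_denseRange_of_le_norm_pow_apply (hT : DenseRange T) {c : ℝ} (hc : 0 < c) {n : ℕ}
    (h : ∀ v, c * ‖v‖ ≤ ‖(T ^ (n + 1)) v‖) : IsUnit T := by
  have le_norm_apply (v : X) : ‖v‖ ≤ Real.toNNReal (‖T ^ n‖ / c) * ‖T v‖ := by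
    rw [Real.coe_toNNReal _ (by positivity), div_mul_eq_mul_div, le_div_iff₀' hc]
    exact (h v).trans ((T ^ n).le_opNorm (T v))
  exact ContinuousLinearMap.isUnit_iff_bijective.2 <|
    T.bijective_iff_dense_range_and_antilipschitz.2
      ⟨Submodule.dense_iff_topologicalClosure_eq_top.1 hT, _,
        AddMonoidHomClass.antilipschitz_of_bound T le_norm_apply⟩

theorem le_norm_of_mem_spectrum_of_le_norm_apply (hT : IsUnit T) {c : ℝ}
    (h : ∀ v, c * ‖v‖ ≤ ‖T v‖) {z : 𝕜} (hz : z ∈ spectrum 𝕜 T) : c ≤ ‖z‖ := by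
  obtain ⟨u, rfl⟩ := hT
  rcases le_or_gt c 0 with hc | hc
  · exact hc.trans (norm_nonneg z)
  rcases subsingleton_or_nontrivial X with hX | hX
  · simp [spectrum.of_subsingleton] at hz
  have norm_inv_le : ‖(↑u⁻¹ : X →L[𝕜] X)‖ ≤ c⁻¹ := by
    refine ContinuousLinearMap.opNorm_le_bound _ (by positivity) fun v => ?_
    rw [le_inv_mul_iff₀ hc]
    simpa [← mul_apply_eq_comp] using h ((↑u⁻¹ : X →L[𝕜] X) v)
  have hz₀ : 0 < ‖z‖ := norm_pos_iff.2 (spectrum.ne_zero_of_mem_of_unit hz)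
  have norm_z_inv_le := spectrum.norm_le_norm_of_mem (spectrum.inv₀_mem_inv_iff.2 hz)
  rw [norm_inv] at norm_z_inv_le
  exact (inv_le_inv₀ hz₀ hc).1 (norm_z_inv_le.trans norm_inv_le)

theorem le_norm_of_mem_spectrum_of_eventually_le_norm_pow_apply (hT : IsUnit T) {r : ℝ}
    (h : ∀ s, 0 < s → s < r → ∀ᶠ n : ℕ in atTop, ∀ v, s ^ n * ‖v‖ ≤ ‖(T ^ n) v‖) {z : 𝕜}
    (hz : z ∈ spectrum 𝕜 T) : r ≤ ‖z‖ := by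
  by_contra! hzr
  obtain ⟨s, hzs, hsr⟩ := exists_between hzr
  have hs : 0 < s := (norm_nonneg z).trans_lt hzs
  obtain ⟨n, hn, hn₀⟩ := ((h s hs hsr).and (eventually_ne_atTop 0)).exists
  have hpow := le_norm_of_mem_spectrum_of_le_norm_apply (hT.pow n) hn (spectrum.pow_mem_pow T n hz)
  rw [norm_pow] at hpow
  exact hzs.not_ge (le_of_pow_le_pow_left₀ hn₀ (norm_nonneg z) hpow)

end BoundedBelow

section LowerBound

variable {X : Type*} [NormedAddCommGroup X] [NormedSpace ℂ X]

theorem lowerBound_nonneg (T : X →L[ℂ] X) : 0 ≤ lowerBound T :=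
  Real.sInf_nonneg (by rintro _ ⟨v, -, rfl⟩; positivity)

theorem lowerBound_le_norm_apply (T : X →L[ℂ] X) {v : X} (hv : ‖v‖ = 1) :
    lowerBound T ≤ ‖T v‖ :=
  csInf_le ⟨0, by rintro _ ⟨w, -, rfl⟩; positivity⟩ ⟨v, by simpa using hv, rfl⟩

variable [Nontrivial X]

theorem lowerBound_le_opNorm (T : X →L[ℂ] X) : lowerBound T ≤ ‖T‖ := by
  obtain ⟨v, hv⟩ := exists_norm_eq X zero_le_one
  simpa [hv] using (lowerBound_le_norm_apply T hv).trans (T.le_opNorm v)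

theorem le_lowerBound {T : X →L[ℂ] X} {c : ℝ} (h : ∀ v, c * ‖v‖ ≤ ‖T v‖) : c ≤ lowerBound T := by
  refine le_csInf ((NormedSpace.sphere_nonempty.2 zero_le_one).image _) ?_
  rintro _ ⟨v, hv, rfl⟩
  simpa [mem_sphere_zero_iff_norm.1 hv] using h v

theorem tendsto_lowerBound_pow_rpow_inv [CompleteSpace X] {T : X →L[ℂ] X}
    (h : ∀ s, 0 < s → s < (spectralRadius ℂ T).toReal →
      ∀ᶠ n : ℕ in atTop, ∀ v, s ^ n * ‖v‖ ≤ ‖(T ^ n) v‖) :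
    Tendsto (fun n : ℕ => lowerBound (T ^ n) ^ (n : ℝ)⁻¹) atTop
      (𝓝 (spectralRadius ℂ T).toReal) := by
  refine tendsto_order.2 ⟨fun a ha => ?_, fun a ha => ?_⟩
  · rcases lt_or_ge a 0 with ha₀ | ha₀
    · exact Eventually.of_forall fun n => ha₀.trans_le (Real.rpow_nonneg (lowerBound_nonneg _) _)
    obtain ⟨s, has, hsr⟩ := exists_between ha
    have hs : 0 < s := ha₀.trans_lt has
    filter_upwards [h s hs hsr, eventually_ne_atTop 0] with n hn hn₀
    calc a < s := has
      _ = (s ^ n) ^ (n : ℝ)⁻¹ := (Real.pow_rpow_inv_natCast hs.le hn₀).symm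
      _ ≤ lowerBound (T ^ n) ^ (n : ℝ)⁻¹ := by gcongr; exact le_lowerBound hn
  · filter_upwards [(tendsto_norm_pow_rpow_inv_spectralRadius T).eventually_lt_const ha] with n hn
    refine (Real.rpow_le_rpow (lowerBound_nonneg _) (lowerBound_le_opNorm _) ?_).trans_lt hn
    positivity

end LowerBound

section OrbitGrowth

variable {E : Type*} [NormedAddCommGroup E] [InnerProductSpace ℂ E] [CompleteSpace E]
  {T : E →L[ℂ] E} {x : ℤ → E}

namespace IsOrthogonalOrbit

theorem eventually_le_norm_pow_apply (h : IsOrthogonalOrbit T x)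
    (hx : Dense (Submodule.span ℂ (Set.range x) : Set E)) (hT : HasBishopBeta T)
    (hTadj : HasBishopBeta (ContinuousLinearMap.adjoint T)) {s : ℝ} (hs : 0 < s)
    (hsr : s < (spectralRadius ℂ T).toReal) :
    ∀ᶠ n : ℕ in atTop, ∀ v, s ^ n * ‖v‖ ≤ ‖(T ^ n) v‖ := by
  obtain ⟨t, hst, htr⟩ := exists_between hsr
  refine (h.eventually_le_norm_pow_apply_or_eventually_norm_pow_le hx hT hTadj hs hst).resolve_right
    fun hle => htr.not_ge ?_
  exact toReal_spectralRadius_le_of_eventually_norm_pow_le (hs.trans hst).le hle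

theorem isUnit_of_spectralRadius_pos (h : IsOrthogonalOrbit T x)
    (hx : Dense (Submodule.span ℂ (Set.range x) : Set E)) (hT : HasBishopBeta T)
    (hTadj : HasBishopBeta (ContinuousLinearMap.adjoint T))
    (hr : 0 < (spectralRadius ℂ T).toReal) : IsUnit T := by
  obtain ⟨s, hs, hsr⟩ := exists_between hr
  have hgrow := h.eventually_le_norm_pow_apply hx hT hTadj hs hsr
  obtain ⟨n, hn⟩ := ((tendsto_add_atTop_nat 1).eventually hgrow).exists
  exact isUnit_of_denseRange_of_le_norm_pow_apply (h.denseRange hx) (by positivity) hn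

end IsOrthogonalOrbit

end OrbitGrowth

section WeightedShift

theorem exists_add_one_eq_mul {G₀ : Type*} [CommGroupWithZero G₀] {w : ℤ → G₀}
    (hw : ∀ n, w n ≠ 0) : ∃ γ : ℤ → G₀, (∀ n, γ n ≠ 0) ∧ ∀ n, γ (n + 1) = w n * γ n := by
  refine ⟨fun n => (∏ k ∈ Finset.Ico 0 n, w k) / ∏ k ∈ Finset.Ico n 0, w k,
    fun n => div_ne_zero (Finset.prod_ne_zero_iff.2 fun k _ => hw k)
      (Finset.prod_ne_zero_iff.2 fun k _ => hw k), fun n => ?_⟩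
  rcases le_or_gt 0 n with hn | hn
  · have hn' : 0 ≤ n + 1 := by lia
    simp [← Finset.prod_Ico_mul_eq_prod_Ico_add_one hn, hn, hn', mul_comm]
  · dsimp only
    rw [← Finset.insert_Ico_add_one_left_eq_Ico hn, Finset.prod_insert (by simp),
      Finset.Ico_eq_empty (by lia : ¬ 0 < n + 1), Finset.Ico_eq_empty (by lia : ¬ 0 < n)]
    field_simp [hw n]

theorem dense_span_range_smul {𝕜 ι E : Type*} [DivisionRing 𝕜] [AddCommGroup E] [Module 𝕜 E]
    [TopologicalSpace E] {v : ι → E} (hv : Dense (Submodule.span 𝕜 (Set.range v) : Set E))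
    {c : ι → 𝕜} (hc : ∀ i, c i ≠ 0) :
    Dense (Submodule.span 𝕜 (Set.range fun i => c i • v i) : Set E) := by
  refine hv.mono (SetLike.coe_subset_coe.2 (Submodule.span_le.2 ?_))
  rintro _ ⟨i, rfl⟩
  rw [← inv_smul_smul₀ (hc i) (v i)]
  exact Submodule.smul_mem _ _ (Submodule.subset_span ⟨i, rfl⟩)

variable {𝕜 ι E : Type*} [RCLike 𝕜] [NormedAddCommGroup E] [InnerProductSpace 𝕜 E]

theorem dense_span_range_hilbertBasis (e : HilbertBasis ι 𝕜 E) :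
    Dense (Submodule.span 𝕜 (Set.range e) : Set E) :=
  Submodule.dense_iff_topologicalClosure_eq_top.2 e.dense_span

theorem exists_linearIsometryEquiv_apply_eq_smul [CompleteSpace E] (e : HilbertBasis ι 𝕜 E)
    {c : ι → 𝕜} (hc : ∀ i, ‖c i‖ = 1) : ∃ V : E ≃ₗᵢ[𝕜] E, ∀ i, V (e i) = c i • e i := by
  classical
  have hon : Orthonormal 𝕜 fun i => c i • e i :=
    ⟨fun i => by rw [norm_smul, hc, e.orthonormal.1, one_mul],
      pairwise_inner_smul_eq_zero e.orthonormal.2 c⟩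
  have hc₀ (i : ι) : c i ≠ 0 := norm_ne_zero_iff.1 (by simp [hc])
  have hdense : ⊤ ≤ (Submodule.span 𝕜 (Set.range fun i => c i • e i)).topologicalClosure :=
    (Submodule.dense_iff_topologicalClosure_eq_top.1 <|
      dense_span_range_smul (dense_span_range_hilbertBasis e) hc₀).ge
  let e' := HilbertBasis.mk hon hdense
  refine ⟨e.repr.trans e'.repr.symm, fun i => ?_⟩
  rw [LinearIsometryEquiv.trans_apply, e.repr_self, e'.repr_symm_single, HilbertBasis.coe_mk]

variable [CompleteSpace E] (e : HilbertBasis ℤ 𝕜 E) {w : ℤ → 𝕜} {S : E →L[𝕜] E}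

theorem spectrum_smul_of_apply_eq_smul (hS : ∀ n, S (e n) = w n • e (n + 1)) {c : 𝕜}
    (hc : ‖c‖ = 1) : spectrum 𝕜 (c • S) = spectrum 𝕜 S := by
  have hc₀ : c ≠ 0 := norm_ne_zero_iff.1 (by simp [hc])
  obtain ⟨V, hV⟩ := exists_linearIsometryEquiv_apply_eq_smul e (c := fun n => c ^ n)
    fun n => by simp [hc]
  let u : (E →L[𝕜] E)ˣ := V.toContinuousLinearEquiv.toUnit
  have hu (n : ℤ) : (u : E →L[𝕜] E) (e n) = c ^ n • e n := hV n
  have intertwine : (u : E →L[𝕜] E) * S = (c • S) * u := by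
    refine ContinuousLinearMap.ext_on (dense_span_range_hilbertBasis e) ?_
    rintro _ ⟨n, rfl⟩
    simp only [mul_apply_eq_comp, hu, hS, map_smul, smul_apply, smul_smul, zpow_add_one₀ hc₀]
    ring_nf
  have conjugate : c • S = u * S * (↑u⁻¹ : E →L[𝕜] E) :=
    (Units.eq_mul_inv_iff_mul_eq u).2 intertwine.symm
  rw [conjugate, spectrum.units_conjugate]

theorem mul_mem_spectrum_of_apply_eq_smul (hS : ∀ n, S (e n) = w n • e (n + 1)) {c : 𝕜}
    (hc : ‖c‖ = 1) {z : 𝕜} (hz : z ∈ spectrum 𝕜 S) : c * z ∈ spectrum 𝕜 S := by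
  have hc₀ : c ≠ 0 := norm_ne_zero_iff.1 (by simp [hc])
  rw [← spectrum_smul_of_apply_eq_smul e hS hc]
  exact (spectrum.unit_smul_eq_smul S (Units.mk0 c hc₀)).ge ⟨z, hz, rfl⟩

end WeightedShift

theorem exists_isOrthogonalOrbit {E : Type*} [NormedAddCommGroup E] [InnerProductSpace ℂ E]
    {S : E →L[ℂ] E} (e : HilbertBasis ℤ ℂ E) {w : ℤ → ℂ} (hw : ∀ n, w n ≠ 0)
    (hS : ∀ n, S (e n) = w n • e (n + 1)) :
    ∃ x, IsOrthogonalOrbit S x ∧ Dense (Submodule.span ℂ (Set.range x) : Set E) := by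
  obtain ⟨γ, hγ₀, hγ⟩ := exists_add_one_eq_mul hw
  refine ⟨fun n => γ n • e n, ⟨fun n => ?_, fun n => ?_, ?_⟩,
    dense_span_range_smul (dense_span_range_hilbertBasis e) hγ₀⟩
  · rw [map_smul, hS, smul_smul, hγ, mul_comm]
  · exact smul_ne_zero (hγ₀ n) (e.orthonormal.ne_zero n)
  · exact pairwise_inner_smul_eq_zero e.orthonormal.2 γ

theorem bilateral_decomposable_general (S : H →L[ℂ] H) (e : HilbertBasis ℤ ℂ H) (w : ℤ → ℂ)
    (hw : ∀ n, w n ≠ 0) (hS : ∀ n, S (e n) = w n • e (n + 1)) (hβ : HasBishopBeta S)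
    (hβadj : HasBishopBeta (ContinuousLinearMap.adjoint S)) :
    (spectrum ℂ S = {0} ∨
      (IsUnit S ∧ spectrum ℂ S = Metric.sphere (0 : ℂ) (spectralRadius ℂ S).toReal)) ∧
    Tendsto (fun n : ℕ => lowerBound (S ^ n) ^ ((n : ℝ)⁻¹)) atTop
      (𝓝 (spectralRadius ℂ S).toReal) := by
  have : Nontrivial H := ⟨e 0, 0, e.orthonormal.ne_zero 0⟩
  obtain ⟨x, h, hx⟩ := exists_isOrthogonalOrbit e hw hS
  have growth (s : ℝ) (hs : 0 < s) (hsr : s < (spectralRadius ℂ S).toReal) :=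
    h.eventually_le_norm_pow_apply hx hβ hβadj hs hsr
  have radius_nonneg : 0 ≤ (spectralRadius ℂ S).toReal := ENNReal.toReal_nonneg
  refine ⟨radius_nonneg.eq_or_lt.imp (fun hr => ?_) fun hr => ?_,
    tendsto_lowerBound_pow_rpow_inv growth⟩
  · exact spectrum_eq_singleton_zero_of_spectralRadius_eq_zero hr.symm
  · have hunit : IsUnit S := h.isUnit_of_spectralRadius_pos hx hβ hβadj hr
    refine ⟨hunit, eq_sphere_of_forall_mul_mem (spectrum.nonempty S) (fun z hz => ?_)
      fun c hc z hz => mul_mem_spectrum_of_apply_eq_smul e hS hc hz⟩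
    exact (norm_le_toReal_spectralRadius hz).antisymm
      (le_norm_of_mem_spectrum_of_eventually_le_norm_pow_apply hunit growth hz)

/-- If a bilateral weighted shift `S` with positive bounded weights is decomposable
(i.e. both `S` and `S*` possess Bishop's property (β)), then either `S` is
quasi-nilpotent, or `S` is invertible and its spectrum is the circle of radius `r(S)`;
in particular `r₁(S) = lim m(Sⁿ)^(1/n)` equals `r(S)`. -/
theorem bilateral_decomposable (S : H →L[ℂ] H)
    (e : HilbertBasis ℤ ℂ H) (ω : ℤ → ℝ) (hpos : ∀ n, 0 < ω n)
    (hbd : ∃ M : ℝ, ∀ n, ω n ≤ M)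
    (hS : ∀ n, S (e n) = (ω n : ℂ) • e (n + 1))
    (hβ : HasBishopBeta S) (hβadj : HasBishopBeta (ContinuousLinearMap.adjoint S)) :
    (spectrum ℂ S = {0} ∨
      (IsUnit S ∧ spectrum ℂ S = Metric.sphere (0 : ℂ) (spectralRadius ℂ S).toReal)) ∧
    Tendsto (fun n : ℕ => lowerBound (S ^ n) ^ ((n : ℝ)⁻¹)) atTop
      (nhds (spectralRadius ℂ S).toReal) :=
  bilateral_decomposable_general S e (fun n => ω n)
    (fun n => Complex.ofReal_ne_zero.2 (hpos n).ne') hS hβ hβadj
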